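/- arXiv:2006.16456 — 2 statements merged into one kernel-verified Lean document; each statement's English description precedes it below -/
import Mathlib

section
/- Let x^t and y^t, t ≥ 0, be families of points of S with x^t → x and y^t → y as t → ∞. Then the limit lim_{t→∞} Π_{x^t,t}(y^t) exists; in particular, Π(x,y) := lim_{t→∞} Π_{x,t}(y) exists, and lim_{t→∞} Π_{x^t,t}(y^t) = Π(x,y) depends only on (x,y). -/
open Filter Topology Metric Set MeasureTheory
open scoped NNReal

noncomputable section

/-- A deviability density on a topological space `E`. -/
def IsDeviabilityDensity {E : Type*} [TopologicalSpace E] (p : E → ℝ) : Prop :=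
  (∀ x, p x ∈ Set.Icc (0:ℝ) 1) ∧ (⨆ x, p x) = 1 ∧
    ∀ γ ∈ Set.Ioc (0:ℝ) 1, IsCompact {x | γ ≤ p x}

variable {S : Type*} [MetricSpace S]

/-- Time shift `θ_s` on continuous paths. -/
def pshift (s : ℝ≥0) (X : C(ℝ≥0, S)) : C(ℝ≥0, S) :=
  ⟨fun t => X (s + t), X.continuous.comp (continuous_const.add continuous_id)⟩

/-- `Π_{x,t}(y)`. -/
def transDen (Px : S → C(ℝ≥0, S) → ℝ) (x : S) (t : ℝ≥0) (y : S) : ℝ :=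
  ⨆ X ∈ {X : C(ℝ≥0, S) | X t = y}, Px x X

/-- The standing assumptions (2.2)--(2.5) of the paper, together with the basic
assumptions on the family of path deviability densities `Px` and the set `A`. -/
structure DevSetup (S : Type*) [MetricSpace S] (Px : S → C(ℝ≥0, S) → ℝ) (A : Set S) :
    Prop where
  dev : ∀ x, IsDeviabilityDensity (Px x)
  start : ∀ x (X : C(ℝ≥0, S)), X 0 ≠ x → Px x X = 0
  /-- (2.2) upper semicontinuity -/
  usc : UpperSemicontinuous (fun q : S × C(ℝ≥0, S) => Px q.1 q.2)
  /-- (2.2) uniform upper compactness -/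
  cpt : ∀ K : Set S, IsCompact K → ∀ γ ∈ Set.Ioc (0:ℝ) 1,
    IsCompact (⋃ x ∈ K, {X : C(ℝ≥0, S) | γ ≤ Px x X})
  /-- (2.3) the maxitive Markov property -/
  markov : ∀ x (X : C(ℝ≥0, S)) (s : ℝ≥0),
    Px x X = (⨆ X' ∈ {X' : C(ℝ≥0, S) | ∀ u ≤ s, X' u = X u}, Px x X') *
      Px (X s) (pshift s X)
  /-- (2.4) `A` is locally finite -/
  locFin : ∀ K : Set S, IsCompact K → (K ∩ A).Finite
  /-- (2.4)(i) -/
  attract : ∀ x (X : C(ℝ≥0, S)), Px x X = 1 → (⨅ t : ℝ≥0, infDist (X t) A) = 0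
  /-- (2.4)(ii) -/
  equil : ∀ a ∈ A, Px a (ContinuousMap.const ℝ≥0 a) = 1
  /-- (2.4)(iii) -/
  connect : ∀ a ∈ A, ∀ a' ∈ A, ∃ t : ℝ≥0, 0 < t ∧ 0 < transDen Px a t a'
  /-- (2.4)(iv) -/
  nearA : ∀ ε : ℝ, 0 < ε → ∃ δ : ℝ, 0 < δ ∧ ∀ x : S, infDist x A < δ →
    ∃ s₀ s₁ : ℝ≥0, 0 < s₀ ∧ 0 < s₁ ∧ ∃ a ∈ A,
      1 - ε < transDen Px x s₀ a ∧ 1 - ε < transDen Px a s₁ x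
  /-- (2.4)(v) -/
  localMove : ∀ x : S, ∀ ε : ℝ, 0 < ε → ∃ δ : ℝ, 0 < δ ∧ ∃ t₀ t₁ : ℝ≥0,
    ∀ x' : S, dist x x' < δ →
      1 - ε < transDen Px x t₀ x' ∧ 1 - ε < transDen Px x' t₁ x
  /-- (2.5) uniform tightness -/
  tight : ∀ K₁ : Set S, IsCompact K₁ → ∀ ε : ℝ, 0 < ε → ∃ K₂ : Set S, IsCompact K₂ ∧
    Filter.limsup (fun t : ℝ≥0 => ⨆ x ∈ K₁, ⨆ y ∈ K₂ᶜ, transDen Px x t y) atTop < ε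

/- Write `Π_x` for `Px x`. Along a path `X` the tail densities `s ↦ Π_{X(s)}(θ_s X)` are increasing
and bounded by `1`, so if `Π_x(X) > 0` then far along the path some stretch of any prescribed length
costs almost nothing. By tightness this stretch starts in a fixed compact set, and upper
semicontinuity and compactness turn (2.4)(i) into: every almost costless path enters a given
neighbourhood of `A` within a fixed time. Hence every path of positive density passes near `A`, by
compactness within a time depending only on a lower bound for the density. So a transition from `x`
to `y` over a long time can be rerouted, at negligible cost, through a point `a ∈ A`. Since waiting
at `a` is free, the same value is then nearly attained at all later times, and `Π_{x,t}(y)` has no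
upcrossings. Moving end points are absorbed by (2.4)(v). -/

lemma le_biSup_of_mem_Icc {ι : Type*} {p : ι → ℝ} (hp : ∀ i, p i ∈ Icc (0 : ℝ) 1) {s : Set ι}
    {i : ι} (hi : i ∈ s) : p i ≤ ⨆ j ∈ s, p j := by
  refine le_ciSup₂ (f := fun j (_ : j ∈ s) ↦ p j) ⟨1, ?_⟩ i hi
  simp only [upperBounds, mem_iUnion, mem_range, mem_ofPred_eq]
  rintro _ ⟨j, _, rfl⟩
  exact (hp j).2

lemma biSup_le_of_nonneg {ι : Type*} {p : ι → ℝ} {s : Set ι} {c : ℝ} (h : ∀ i ∈ s, p i ≤ c)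
    (hc : 0 ≤ c) : (⨆ i ∈ s, p i) ≤ c :=
  Real.iSup_le (fun i ↦ Real.iSup_le (h i) hc) hc

lemma biSup_mem_Icc {ι : Type*} {p : ι → ℝ} (hp : ∀ i, p i ∈ Icc (0 : ℝ) 1) (s : Set ι) :
    (⨆ i ∈ s, p i) ∈ Icc (0 : ℝ) 1 :=
  ⟨Real.iSup_nonneg fun i ↦ Real.iSup_nonneg fun _ ↦ (hp i).1,
    biSup_le_of_nonneg (fun i _ ↦ (hp i).2) zero_le_one⟩

lemma exists_lt_of_lt_biSup {ι : Type*} {p : ι → ℝ} {s : Set ι} {c : ℝ} (hc : 0 ≤ c)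
    (h : c < ⨆ i ∈ s, p i) : ∃ i ∈ s, c < p i := by
  contrapose! h
  exact biSup_le_of_nonneg h hc

lemma biSup_mul_le {ι : Type*} {p : ι → ℝ} {s : Set ι} {c r : ℝ} (hr : 0 ≤ r)
    (h : ∀ i ∈ s, p i * r ≤ c) (hc : 0 ≤ c) : (⨆ i ∈ s, p i) * r ≤ c := by
  simp only [Real.iSup_mul_of_nonneg hr]
  exact biSup_le_of_nonneg h hc

lemma exists_lt_one_forall_lt_mul_mul {c c' : ℝ} (hc' : 0 < c') (h : c < c') :
    ∃ r < 1, ∀ ⦃p u q : ℝ⦄, r < p → c' ≤ u → r < q → c < p * u * q := by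
  have hcont : ContinuousAt (fun r : ℝ ↦ r * c' * r) 1 := by fun_prop
  have hnear : ∀ᶠ r in 𝓝[<] (1 : ℝ), (c < r * c' * r ∧ 0 < r) ∧ r < 1 :=
    (((hcont.eventually_const_lt (by simpa using h)).and
      (lt_mem_nhds one_pos)).filter_mono nhdsWithin_le_nhds).and self_mem_nhdsWithin
  obtain ⟨r, ⟨hcr, hr0⟩, hr1⟩ := hnear.exists
  refine ⟨r, hr1, fun p u q hp hu hq ↦ hcr.trans_le ?_⟩
  have hp0 : 0 < p := hr0.trans hp
  have hu0 : 0 < u := hc'.trans_le hu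
  gcongr

section Transition

/-- A maxitive analogue of a Markov transition kernel: `P x t y ∈ [0, 1]` is the density of being
at `y` a time `t` after being at `x`. Of the maxitive Chapman–Kolmogorov equation
`P x (s + t) z = sup_y P x s y * P y t z` only the lower bound is required. -/
structure IsMaxitiveTransition {E : Type*} (P : E → ℝ≥0 → E → ℝ) : Prop where
  mem_Icc : ∀ x t y, P x t y ∈ Icc (0 : ℝ) 1
  mul_le_add : ∀ x s y t z, P x s y * P y t z ≤ P x (s + t) z

/-- The point `x` can be moved to and from all nearby points at arbitrarily small cost, in times
which do not depend on the nearby point; this is condition (2.4)(v) at `x`. -/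
def IsLocallyAccessible {E : Type*} [TopologicalSpace E] (P : E → ℝ≥0 → E → ℝ) (x : E) : Prop :=
  ∀ r < 1, ∃ t₀ t₁ : ℝ≥0, ∀ᶠ x' in 𝓝 x, r < P x t₀ x' ∧ r < P x' t₁ x

namespace IsMaxitiveTransition

variable {E : Type*} {P : E → ℝ≥0 → E → ℝ}

lemma mul_mul_le (hP : IsMaxitiveTransition P) (x y z w : E) (s t u : ℝ≥0) :
    P x s y * P y t z * P z u w ≤ P x (s + t + u) w :=
  (mul_le_mul_of_nonneg_right (hP.mul_le_add x s y t z) (hP.mem_Icc z u w).1).trans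
    (hP.mul_le_add x (s + t) z u w)

lemma mul_le_of_add_le (hP : IsMaxitiveTransition P) {a : E} (ha : ∀ t, P a t a = 1) (x y : E)
    {s t u : ℝ≥0} (hu : s + t ≤ u) : P x s a * P a t y ≤ P x u y := by
  obtain ⟨w, rfl⟩ := exists_add_of_le hu
  simpa only [ha w, mul_one, add_right_comm] using hP.mul_mul_le x a a y s w t

theorem exists_tendsto_of_frequently (hP : IsMaxitiveTransition P) {x y : E}
    (hP' : ∀ ⦃c c' : ℝ⦄, 0 < c' → c < c' → (∃ᶠ t in atTop, c' < P x t y) →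
      ∀ᶠ t in atTop, c < P x t y) :
    ∃ L, Tendsto (P x · y) atTop (𝓝 L) := by
  refine tendsto_of_no_upcrossings dense_univ ?_ (isBoundedUnder_of ⟨1, fun t ↦ ?_⟩)
    (isBoundedUnder_of ⟨0, fun t ↦ ?_⟩)
  · rintro c - c' - hcc' ⟨hlow, hhigh⟩
    obtain ⟨t, ht⟩ := hlow.exists
    have hc' : 0 < c' := ((hP.mem_Icc x t y).1.trans_lt ht).trans hcc'
    obtain ⟨u, hu, hcu⟩ := (hlow.and_eventually (hP' hc' hcc' hhigh)).exists
    exact lt_asymm hu hcu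
  · exact (hP.mem_Icc x t y).2
  · exact (hP.mem_Icc x t y).1

variable [TopologicalSpace E] {x y : E}

lemma exists_eventually_lt (hP : IsMaxitiveTransition P) (hx : IsLocallyAccessible P x)
    (hy : IsLocallyAccessible P y) {c c' : ℝ} (hc' : 0 < c') (h : c < c') :
    ∃ p q : ℝ≥0, ∀ᶠ z in 𝓝 x ×ˢ 𝓝 y, ∀ t, c' ≤ P x t y → c < P z.1 (p + t + q) z.2 := by
  obtain ⟨r, hr, hlt⟩ := exists_lt_one_forall_lt_mul_mul hc' h
  obtain ⟨_, p, hp⟩ := hx r hr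
  obtain ⟨q, _, hq⟩ := hy r hr
  refine ⟨p, q, (hp.prod_mk hq).mono fun z hz t ht ↦ ?_⟩
  exact (hlt hz.1.2 ht hz.2.1).trans_le (hP.mul_mul_le z.1 x y z.2 p t q)

lemma exists_eventually_lt_symm (hP : IsMaxitiveTransition P) (hx : IsLocallyAccessible P x)
    (hy : IsLocallyAccessible P y) {c c' : ℝ} (hc' : 0 < c') (h : c < c') :
    ∃ p q : ℝ≥0, ∀ᶠ z in 𝓝 x ×ˢ 𝓝 y, ∀ t, c' ≤ P z.1 t z.2 → c < P x (p + t + q) y := by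
  obtain ⟨r, hr, hlt⟩ := exists_lt_one_forall_lt_mul_mul hc' h
  obtain ⟨p, _, hp⟩ := hx r hr
  obtain ⟨_, q, hq⟩ := hy r hr
  refine ⟨p, q, (hp.prod_mk hq).mono fun z hz t ht ↦ ?_⟩
  exact (hlt hz.1.1 ht hz.2.2).trans_le (hP.mul_mul_le x z.1 z.2 y p t q)

theorem tendsto_of_tendsto (hP : IsMaxitiveTransition P) (hx : IsLocallyAccessible P x)
    (hy : IsLocallyAccessible P y) {L : ℝ} (hL : Tendsto (P x · y) atTop (𝓝 L)) {xt yt : ℝ≥0 → E}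
    (hxt : Tendsto xt atTop (𝓝 x)) (hyt : Tendsto yt atTop (𝓝 y)) :
    Tendsto (fun t ↦ P (xt t) t (yt t)) atTop (𝓝 L) := by
  have hxyt : Tendsto (fun t ↦ (xt t, yt t)) atTop (𝓝 x ×ˢ 𝓝 y) := hxt.prodMk hyt
  refine tendsto_order.2 ⟨fun c hc ↦ ?_, fun c hc ↦ ?_⟩
  · rcases lt_or_ge c 0 with hc0 | hc0
    · exact Eventually.of_forall fun t ↦ hc0.trans_le (hP.mem_Icc _ _ _).1
    obtain ⟨c', hcc', hc'L⟩ := exists_between hc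
    obtain ⟨p, q, hpq⟩ := hP.exists_eventually_lt hx hy (hc0.trans_lt hcc') hcc'
    obtain ⟨t₀, ht₀⟩ := eventually_atTop.1 (hL.eventually_const_le hc'L)
    filter_upwards [hxyt.eventually hpq, eventually_ge_atTop (p + t₀ + q)] with t ht htge
    obtain ⟨w, rfl⟩ := exists_add_of_le htge
    simpa only [add_assoc, add_comm q w] using ht (t₀ + w) (ht₀ _ le_self_add)
  · obtain ⟨c', hLc', hc'c⟩ := exists_between hc
    have hL0 : 0 ≤ L := ge_of_tendsto' hL fun t ↦ (hP.mem_Icc x t y).1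
    obtain ⟨p, q, hpq⟩ := hP.exists_eventually_lt_symm hx hy (hL0.trans_lt hc) hc'c
    have hshift : Tendsto (fun t ↦ p + t + q) atTop atTop :=
      tendsto_atTop_mono (fun t ↦ le_add_self.trans le_self_add) tendsto_id
    filter_upwards [hxyt.eventually hpq,
      hshift.eventually (hL.eventually_lt_const hLc')] with t ht htlt
    contrapose! htlt
    exact (ht t htlt).le

end IsMaxitiveTransition

end Transition

lemma exists_uniform_hitting_time_of_isCompact {E : Type*} [TopologicalSpace E]
    {C : Set C(ℝ≥0, E)} (hC : IsCompact C) {U : Set E} (hU : IsOpen U)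
    (hCU : ∀ X ∈ C, ∃ s, X s ∈ U) : ∃ T, ∀ X ∈ C, ∃ s ≤ T, X s ∈ U := by
  let V : ℝ≥0 → Set C(ℝ≥0, E) := fun T ↦ ⋃ s ≤ T, {X | X s ∈ U}
  have hmem (T : ℝ≥0) (X : C(ℝ≥0, E)) : X ∈ V T ↔ ∃ s ≤ T, X s ∈ U := by
    simp only [V, mem_iUnion, mem_ofPred_eq, exists_prop]
  have hVopen (T : ℝ≥0) : IsOpen (V T) :=
    isOpen_biUnion fun s _ ↦ hU.preimage (continuous_eval_const s)
  have hVmono : Monotone V := fun _ _ h ↦ biUnion_subset_biUnion_left fun _ hs ↦ hs.trans h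
  have hCV : C ⊆ ⋃ T, V T := fun X hX ↦ by
    obtain ⟨s, hs⟩ := hCU X hX
    exact mem_iUnion.2 ⟨s, (hmem s X).2 ⟨s, le_rfl, hs⟩⟩
  obtain ⟨T, hT⟩ := hC.elim_directed_cover V hVopen hCV hVmono.directed_le
  exact ⟨T, fun X hX ↦ (hmem T X).1 (hT hX)⟩

/-- The concatenation of the path `X` up to time `s` with the path `Y`. -/
def concatAt (X Y : C(ℝ≥0, S)) (s : ℝ≥0) (h : Y 0 = X s) : C(ℝ≥0, S) where
  toFun t := if t ≤ s then X t else Y (t - s)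
  continuous_toFun := by
    refine X.continuous.if_le (by fun_prop) continuous_id continuous_const ?_
    rintro t rfl
    simpa using h.symm

lemma concatAt_of_le {X Y : C(ℝ≥0, S)} {s t : ℝ≥0} (h : Y 0 = X s) (ht : t ≤ s) :
    concatAt X Y s h t = X t :=
  if_pos ht

lemma pshift_concatAt {X Y : C(ℝ≥0, S)} {s : ℝ≥0} (h : Y 0 = X s) :
    pshift s (concatAt X Y s h) = Y := by
  ext t
  rcases eq_or_ne t 0 with rfl | ht
  · simp [pshift, concatAt, h]
  · simp [pshift, concatAt, ht]

lemma pshift_pshift (s t : ℝ≥0) (X : C(ℝ≥0, S)) :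
    pshift t (pshift s X) = pshift (s + t) X := by
  ext u
  simp only [pshift, ContinuousMap.coe_mk, add_assoc]

/-- A maxitive Markov family: `Px x` is a `[0, 1]`-valued density on the paths started at `x`, and
(2.3) holds. -/
structure IsMaxitiveMarkov (Px : S → C(ℝ≥0, S) → ℝ) : Prop where
  mem_Icc : ∀ x X, Px x X ∈ Icc (0 : ℝ) 1
  eq_zero_of_ne : ∀ x (X : C(ℝ≥0, S)), X 0 ≠ x → Px x X = 0
  eq_biSup_mul : ∀ x (X : C(ℝ≥0, S)) (s : ℝ≥0),
    Px x X = (⨆ X' ∈ {X' : C(ℝ≥0, S) | ∀ u ≤ s, X' u = X u}, Px x X') * Px (X s) (pshift s X)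

/-- Paths of density one pass arbitrarily close to `A`, where closeness is measured by `transDen`:
for each `r < 1` all such paths enter an open set, between each point of which and some point of `A`
one can move in both directions with density above `r`. Under (2.4)(i) and (2.4)(iv) this open set
can be taken to be a neighbourhood of `A` in the metric. -/
def IsAttracting (Px : S → C(ℝ≥0, S) → ℝ) (A : Set S) : Prop :=
  ∀ r < 1, ∃ U, IsOpen U ∧ (∀ x X, Px x X = 1 → ∃ s, X s ∈ U) ∧
    ∀ x ∈ U, ∃ a ∈ A, ∃ s₀ s₁, r < transDen Px x s₀ a ∧ r < transDen Px a s₁ x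

namespace IsMaxitiveMarkov

variable {Px : S → C(ℝ≥0, S) → ℝ}

lemma start_eq (hPx : IsMaxitiveMarkov Px) {x : S} {X : C(ℝ≥0, S)} (h : 0 < Px x X) : X 0 = x :=
  not_imp_comm.1 (hPx.eq_zero_of_ne x X) h.ne'

lemma transDen_mem_Icc (hPx : IsMaxitiveMarkov Px) (x : S) (t : ℝ≥0) (y : S) :
    transDen Px x t y ∈ Icc (0 : ℝ) 1 :=
  biSup_mem_Icc (hPx.mem_Icc x) _

lemma le_transDen (hPx : IsMaxitiveMarkov Px) (x : S) (X : C(ℝ≥0, S)) (t : ℝ≥0) :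
    Px x X ≤ transDen Px x t (X t) :=
  le_biSup_of_mem_Icc (s := {Y : C(ℝ≥0, S) | Y t = X t}) (hPx.mem_Icc x) rfl

lemma transDen_self_eq_one (hPx : IsMaxitiveMarkov Px) {a : S}
    (ha : Px a (ContinuousMap.const ℝ≥0 a) = 1) (t : ℝ≥0) : transDen Px a t a = 1 :=
  (hPx.transDen_mem_Icc a t a).2.antisymm (ha ▸ hPx.le_transDen a (.const ℝ≥0 a) t)

lemma le_pshift (hPx : IsMaxitiveMarkov Px) (x : S) (X : C(ℝ≥0, S)) (s : ℝ≥0) :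
    Px x X ≤ Px (X s) (pshift s X) := by
  rw [hPx.eq_biSup_mul x X s]
  exact mul_le_of_le_one_left (hPx.mem_Icc _ _).1 (biSup_mem_Icc (hPx.mem_Icc x) _).2

lemma le_transDen_mul (hPx : IsMaxitiveMarkov Px) (x : S) (X : C(ℝ≥0, S)) (s t : ℝ≥0) :
    Px x X ≤ transDen Px x s (X s) * transDen Px (X s) t (X (s + t)) := by
  have hprefix : (⨆ X' ∈ {X' : C(ℝ≥0, S) | ∀ u ≤ s, X' u = X u}, Px x X') ≤
      transDen Px x s (X s) :=
    biSup_le_of_nonneg (fun X' hX' ↦ hX' s le_rfl ▸ hPx.le_transDen x X' s)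
      (hPx.transDen_mem_Icc _ _ _).1
  rw [hPx.eq_biSup_mul x X s]
  exact mul_le_mul hprefix (hPx.le_transDen (X s) (pshift s X) t) (hPx.mem_Icc _ _).1
    (hPx.transDen_mem_Icc _ _ _).1

lemma mul_le_transDen (hPx : IsMaxitiveMarkov Px) (x : S) (X Y : C(ℝ≥0, S)) (s t : ℝ≥0) :
    Px x X * Px (X s) Y ≤ transDen Px x (s + t) (Y t) := by
  by_cases h : Y 0 = X s
  · let Z := concatAt X Y s h
    have hZs : Z s = X s := concatAt_of_le h le_rfl
    have hZshift : pshift s Z = Y := pshift_concatAt h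
    calc Px x X * Px (X s) Y
      _ ≤ (⨆ X' ∈ {X' : C(ℝ≥0, S) | ∀ u ≤ s, X' u = Z u}, Px x X') * Px (X s) Y :=
        mul_le_mul_of_nonneg_right (le_biSup_of_mem_Icc (hPx.mem_Icc x)
          fun u hu ↦ (concatAt_of_le h hu).symm) (hPx.mem_Icc _ _).1
      _ = Px x Z := by rw [hPx.eq_biSup_mul x Z s, hZs, hZshift]
      _ ≤ transDen Px x (s + t) (pshift s Z t) := hPx.le_transDen x Z (s + t)
      _ = transDen Px x (s + t) (Y t) := by rw [hZshift]
  · rw [hPx.eq_zero_of_ne _ _ h, mul_zero]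
    exact (hPx.transDen_mem_Icc _ _ _).1

theorem isMaxitiveTransition (hPx : IsMaxitiveMarkov Px) : IsMaxitiveTransition (transDen Px) where
  mem_Icc := hPx.transDen_mem_Icc
  mul_le_add x s y t z := by
    have hnonneg := (hPx.transDen_mem_Icc x (s + t) z).1
    refine biSup_mul_le (hPx.transDen_mem_Icc y t z).1 ?_ hnonneg
    rintro X rfl
    rw [mul_comm]
    refine biSup_mul_le (hPx.mem_Icc x X).1 ?_ hnonneg
    rintro Y rfl
    exact (mul_comm _ _).trans_le (hPx.mul_le_transDen x X Y s t)

lemma exists_threshold_forall_hits (hPx : IsMaxitiveMarkov Px)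
    (husc : UpperSemicontinuous fun z : S × C(ℝ≥0, S) ↦ Px z.1 z.2) {K : Set S}
    {γ : ℝ} (hγ : γ ∈ Ioo (0 : ℝ) 1) (hK : IsCompact (⋃ x ∈ K, {X | γ ≤ Px x X})) {U : Set S}
    (hU : IsOpen U) (hhit : ∀ x X, Px x X = 1 → ∃ s, X s ∈ U) :
    ∃ η ∈ Ioo (0 : ℝ) 1, ∀ x ∈ K, ∀ X, η < Px x X → ∃ s, X s ∈ U := by
  let D : Set C(ℝ≥0, S) := (⋃ x ∈ K, {X | γ ≤ Px x X}) ∩ {X | ∀ s, X s ∈ Uᶜ}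
  have hD : IsCompact D := by
    refine hK.inter_right ?_
    simp only [ofPred_forall]
    exact isClosed_iInter fun s ↦ hU.isClosed_compl.preimage (continuous_eval_const s)
  have husc' : UpperSemicontinuous fun X : C(ℝ≥0, S) ↦ Px (X 0) X :=
    husc.comp ((continuous_eval_const 0).prodMk continuous_id)
  rcases D.eq_empty_or_nonempty with hDe | hDne
  · refine ⟨γ, hγ, fun x hx X hX ↦ ?_⟩
    by_contra! hXU
    exact hDe.subset ⟨mem_biUnion hx hX.le, hXU⟩
  · obtain ⟨W, ⟨-, hWU⟩, hWmax⟩ := (husc'.upperSemicontinuousOn D).exists_isMaxOn hDne hD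
    have hW : Px (W 0) W < 1 := by
      refine (hPx.mem_Icc _ _).2.lt_of_ne fun h ↦ ?_
      obtain ⟨s, hs⟩ := hhit _ W h
      exact hWU s hs
    refine ⟨max γ (Px (W 0) W), ⟨lt_max_of_lt_left hγ.1, max_lt hγ.2 hW⟩,
      fun x hx X hX ↦ ?_⟩
    obtain ⟨hγX, hXW⟩ := max_lt_iff.1 hX
    by_contra! hXU
    have hmax : Px (X 0) X ≤ Px (W 0) W := hWmax ⟨mem_biUnion hx hγX.le, hXU⟩
    rw [hPx.start_eq (hγ.1.trans hγX)] at hmax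
    exact hmax.not_gt hXW

lemma exists_threshold_uniform_hitting_time (hPx : IsMaxitiveMarkov Px)
    (husc : UpperSemicontinuous fun z : S × C(ℝ≥0, S) ↦ Px z.1 z.2) {K : Set S}
    (hK : ∀ γ ∈ Ioc (0 : ℝ) 1, IsCompact (⋃ x ∈ K, {X | γ ≤ Px x X})) {U : Set S} (hU : IsOpen U)
    (hhit : ∀ x X, Px x X = 1 → ∃ s, X s ∈ U) :
    ∃ η ∈ Ioo (0 : ℝ) 1, ∃ T, ∀ x ∈ K, ∀ X, η < Px x X → ∃ s ≤ T, X s ∈ U := by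
  obtain ⟨η, ⟨hη0, hη1⟩, hη⟩ := hPx.exists_threshold_forall_hits husc
    (γ := 1 / 2) (by norm_num) (hK _ (by norm_num)) hU hhit
  obtain ⟨η', hηη', hη'1⟩ := exists_between hη1
  have hη'0 : 0 < η' := hη0.trans hηη'
  obtain ⟨T, hT⟩ := exists_uniform_hitting_time_of_isCompact (hK η' ⟨hη'0, hη'1.le⟩) hU <| by
    simp only [mem_iUnion, mem_ofPred_eq]
    rintro X ⟨x, hx, hX⟩
    exact hη x hx X (hηη'.trans_le hX)
  exact ⟨η', ⟨hη'0, hη'1⟩, T, fun x hx X hX ↦ hT X (mem_biUnion hx hX.le)⟩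

lemma exists_ge_mul_pshift_lt (hPx : IsMaxitiveMarkov Px) {x : S} {X : C(ℝ≥0, S)}
    (hX : 0 < Px x X) {η : ℝ} (hη0 : 0 ≤ η) (hη1 : η < 1) (s₀ T : ℝ≥0) :
    ∃ s ≥ s₀, η * Px (X (s + T)) (pshift (s + T) X) < Px (X s) (pshift s X) := by
  let f : ℝ≥0 → ℝ := fun s ↦ Px (X s) (pshift s X)
  have hf (s u : ℝ≥0) : f s ≤ f (s + u) :=
    (hPx.le_pshift (X s) (pshift s X) u).trans_eq (by rw [pshift_pshift]; rfl)
  have hbdd : BddAbove (range f) := ⟨1, forall_mem_range.2 fun s ↦ (hPx.mem_Icc _ _).2⟩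
  have hpos : 0 < ⨆ s, f s := (hX.trans_le (hPx.le_pshift x X 0)).trans_le (le_ciSup hbdd 0)
  obtain ⟨s, hs⟩ := exists_lt_of_lt_ciSup (mul_lt_of_lt_one_left hpos hη1)
  refine ⟨s + s₀, le_add_self, ?_⟩
  calc η * f (s + s₀ + T)
    _ ≤ η * ⨆ s, f s := mul_le_mul_of_nonneg_left (le_ciSup hbdd _) hη0
    _ < f s := hs
    _ ≤ f (s + s₀) := hf s s₀

lemma exists_mem_of_density_pos (hPx : IsMaxitiveMarkov Px) {x : S} {X : C(ℝ≥0, S)}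
    (hX : 0 < Px x X) {K U : Set S} (hXK : ∀ᶠ s in atTop, X s ∈ K) {η : ℝ} (hη0 : 0 ≤ η)
    (hη1 : η < 1) {T : ℝ≥0}
    (hhit : ∀ z ∈ K, ∀ Z, η < Px z Z → ∃ s ≤ T, Z s ∈ U) : ∃ s, X s ∈ U := by
  obtain ⟨s₀, hs₀⟩ := eventually_atTop.1 hXK
  obtain ⟨s, hs, hlt⟩ := hPx.exists_ge_mul_pshift_lt hX hη0 hη1 s₀ T
  have htail : 0 < Px (X (s + T)) (pshift (s + T) X) := hX.trans_le (hPx.le_pshift x X (s + T))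
  rw [hPx.eq_biSup_mul (X s) (pshift s X) T, pshift_pshift] at hlt
  obtain ⟨X', hX', hηX'⟩ := exists_lt_of_lt_biSup hη0 (lt_of_mul_lt_mul_right hlt htail.le)
  obtain ⟨u, huT, hu⟩ := hhit (X s) (hs₀ s hs) X' hηX'
  exact ⟨s + u, hX' u huT ▸ hu⟩

lemma exists_uniform_hitting_time_of_tight (hPx : IsMaxitiveMarkov Px)
    (husc : UpperSemicontinuous fun z : S × C(ℝ≥0, S) ↦ Px z.1 z.2)
    (hcpt : ∀ K, IsCompact K → ∀ γ ∈ Ioc (0 : ℝ) 1, IsCompact (⋃ x ∈ K, {X | γ ≤ Px x X}))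
    {x : S} {γ : ℝ} (hγ : γ ∈ Ioc (0 : ℝ) 1)
    (htight : ∃ K, IsCompact K ∧ ∀ᶠ t in atTop, ∀ y, γ ≤ transDen Px x t y → y ∈ K) {U : Set S}
    (hU : IsOpen U) (hhit : ∀ z Z, Px z Z = 1 → ∃ s, Z s ∈ U) :
    ∃ T, ∀ X, γ ≤ Px x X → ∃ s ≤ T, X s ∈ U := by
  obtain ⟨K, hK, hKx⟩ := htight
  obtain ⟨η, ⟨hη0, hη1⟩, T, hT⟩ :=
    hPx.exists_threshold_uniform_hitting_time husc (hcpt K hK) hU hhit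
  have hcompact : IsCompact {X | γ ≤ Px x X} := by simpa using hcpt {x} isCompact_singleton γ hγ
  refine exists_uniform_hitting_time_of_isCompact hcompact hU fun X hX ↦ ?_
  exact hPx.exists_mem_of_density_pos (hγ.1.trans_le hX)
    (hKx.mono fun s hs ↦ hs _ (hX.trans (hPx.le_transDen x X s))) hη0.le hη1 hT

lemma exists_lt_transDen_mul_transDen (hPx : IsMaxitiveMarkov Px)
    (husc : UpperSemicontinuous fun z : S × C(ℝ≥0, S) ↦ Px z.1 z.2)
    (hcpt : ∀ K, IsCompact K → ∀ γ ∈ Ioc (0 : ℝ) 1, IsCompact (⋃ x ∈ K, {X | γ ≤ Px x X}))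
    {A : Set S} (hA : IsAttracting Px A) {x y : S} {γ c : ℝ} (hγ : 0 < γ) (hc : c < γ)
    (htight : ∃ K, IsCompact K ∧ ∀ᶠ t in atTop, ∀ y, γ ≤ transDen Px x t y → y ∈ K)
    (hfreq : ∃ᶠ t in atTop, γ < transDen Px x t y) :
    ∃ a ∈ A, ∃ s t, c < transDen Px x s a * transDen Px a t y := by
  have hP := hPx.isMaxitiveTransition
  obtain ⟨r, hr1, hr⟩ := exists_lt_one_forall_lt_mul_mul hγ hc
  obtain ⟨U, hU, hhit, hreach⟩ := hA r hr1
  have hγ1 : γ ≤ 1 := by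
    obtain ⟨t, ht⟩ := hfreq.exists
    exact ht.le.trans (hP.mem_Icc x t y).2
  obtain ⟨T, hT⟩ := hPx.exists_uniform_hitting_time_of_tight husc hcpt ⟨hγ, hγ1⟩ htight hU hhit
  obtain ⟨t, hγt, hTt⟩ := (hfreq.and_eventually (eventually_ge_atTop T)).exists
  obtain ⟨X, rfl, hX⟩ := exists_lt_of_lt_biSup hγ.le hγt
  obtain ⟨s, hsT, hs⟩ := hT X hX.le
  obtain ⟨w, rfl⟩ := exists_add_of_le (hsT.trans hTt)
  obtain ⟨a, ha, s₀, s₁, hto, hback⟩ := hreach (X s) hs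
  have hsplit := hX.le.trans (hPx.le_transDen_mul x X s w)
  refine ⟨a, ha, s + s₀, s₁ + w, ?_⟩
  calc c
    _ < transDen Px (X s) s₀ a *
        (transDen Px x s (X s) * transDen Px (X s) w (X (s + w))) * transDen Px a s₁ (X s) :=
      hr hto hsplit hback
    _ = (transDen Px x s (X s) * transDen Px (X s) s₀ a) *
        (transDen Px a s₁ (X s) * transDen Px (X s) w (X (s + w))) := by ring
    _ ≤ transDen Px x (s + s₀) a * transDen Px a (s₁ + w) (X (s + w)) :=
      mul_le_mul (hP.mul_le_add ..) (hP.mul_le_add ..)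
        (mul_nonneg (hP.mem_Icc ..).1 (hP.mem_Icc ..).1) (hP.mem_Icc ..).1

end IsMaxitiveMarkov

namespace DevSetup

variable {Px : S → C(ℝ≥0, S) → ℝ} {A : Set S}

lemma isMaxitiveMarkov (hyp : DevSetup S Px A) : IsMaxitiveMarkov Px where
  mem_Icc x := (hyp.dev x).1
  eq_zero_of_ne := hyp.start
  eq_biSup_mul := hyp.markov

lemma isAttracting (hyp : DevSetup S Px A) : IsAttracting Px A := by
  intro r hr
  obtain ⟨δ, hδ, hnear⟩ := hyp.nearA (1 - r) (sub_pos.2 hr)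
  refine ⟨{x | infDist x A < δ}, isOpen_lt (continuous_infDist_pt A) continuous_const,
    fun x X hX ↦ exists_lt_of_ciInf_lt ((hyp.attract x X hX).trans_lt hδ), fun x hx ↦ ?_⟩
  obtain ⟨s₀, s₁, -, -, a, ha, hto, hback⟩ := hnear x hx
  rw [sub_sub_cancel] at hto hback
  exact ⟨a, ha, s₀, s₁, hto, hback⟩

lemma isLocallyAccessible (hyp : DevSetup S Px A) (x : S) :
    IsLocallyAccessible (transDen Px) x := by
  intro r hr
  obtain ⟨δ, hδ, t₀, t₁, hmove⟩ := hyp.localMove x (1 - r) (sub_pos.2 hr)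
  simp only [sub_sub_cancel] at hmove
  exact ⟨t₀, t₁, eventually_nhds_iff.2 ⟨δ, hδ, fun x' hx' ↦ hmove x' (dist_comm x' x ▸ hx')⟩⟩

lemma exists_isCompact_eventually_mem (hyp : DevSetup S Px A) (x : S) {γ : ℝ} (hγ : 0 < γ) :
    ∃ K, IsCompact K ∧ ∀ᶠ t in atTop, ∀ y, γ ≤ transDen Px x t y → y ∈ K := by
  obtain ⟨K, hK, hlim⟩ := hyp.tight {x} isCompact_singleton γ hγ
  have hmem (t : ℝ≥0) (z : S) : (⨆ y ∈ Kᶜ, transDen Px z t y) ∈ Icc (0 : ℝ) 1 :=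
    biSup_mem_Icc (hyp.isMaxitiveMarkov.transDen_mem_Icc z t) Kᶜ
  have hev := eventually_lt_of_limsup_lt hlim
    (isBoundedUnder_of ⟨1, fun t ↦ (biSup_mem_Icc (hmem t) {x}).2⟩)
  refine ⟨K, hK, hev.mono fun t ht y hy ↦ ?_⟩
  by_contra hyK
  refine ht.not_ge (hy.trans ?_)
  calc transDen Px x t y
    _ ≤ ⨆ y ∈ Kᶜ, transDen Px x t y :=
      le_biSup_of_mem_Icc (hyp.isMaxitiveMarkov.transDen_mem_Icc x t) hyK
    _ ≤ ⨆ z ∈ ({x} : Set S), ⨆ y ∈ Kᶜ, transDen Px z t y :=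
      le_biSup_of_mem_Icc (hmem t) (mem_singleton x)

end DevSetup

theorem stmt2_general (Px : S → C(ℝ≥0, S) → ℝ) (A : Set S) (hPx : IsMaxitiveMarkov Px)
    (husc : UpperSemicontinuous fun z : S × C(ℝ≥0, S) ↦ Px z.1 z.2)
    (hcpt : ∀ K, IsCompact K → ∀ γ ∈ Ioc (0 : ℝ) 1, IsCompact (⋃ x ∈ K, {X | γ ≤ Px x X}))
    (hequil : ∀ a ∈ A, Px a (ContinuousMap.const ℝ≥0 a) = 1) (hA : IsAttracting Px A)
    (hloc : ∀ x, IsLocallyAccessible (transDen Px) x)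
    (htight : ∀ x, ∀ γ > 0, ∃ K, IsCompact K ∧
      ∀ᶠ t in atTop, ∀ y, γ ≤ transDen Px x t y → y ∈ K) :
    ∃ PL : S → S → ℝ, ∀ (x y : S) (xt yt : ℝ≥0 → S),
      Tendsto xt atTop (𝓝 x) → Tendsto yt atTop (𝓝 y) →
      Tendsto (fun t : ℝ≥0 => transDen Px (xt t) t (yt t)) atTop (𝓝 (PL x y)) := by
  have hP := hPx.isMaxitiveTransition
  have hlim (x y : S) : ∃ L, Tendsto (transDen Px x · y) atTop (𝓝 L) := by
    refine hP.exists_tendsto_of_frequently fun c c' hc' hc hfreq ↦ ?_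
    obtain ⟨a, ha, s, t, hst⟩ := hPx.exists_lt_transDen_mul_transDen husc hcpt hA hc' hc
      (htight x c' hc') hfreq
    filter_upwards [eventually_ge_atTop (s + t)] with u hu
    exact hst.trans_le (hP.mul_le_of_add_le (hPx.transDen_self_eq_one (hequil a ha)) x y hu)
  choose PL hPL using hlim
  exact ⟨PL, fun x y xt yt ↦ hP.tendsto_of_tendsto (hloc x) (hloc y) (hPL x y)⟩

theorem stmt2 (Px : S → C(ℝ≥0, S) → ℝ) (A : Set S) (hyp : DevSetup S Px A) :
    ∃ PL : S → S → ℝ, ∀ (x y : S) (xt yt : ℝ≥0 → S),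
      Tendsto xt atTop (𝓝 x) → Tendsto yt atTop (𝓝 y) →
      Tendsto (fun t : ℝ≥0 => transDen Px (xt t) t (yt t)) atTop (𝓝 (PL x y)) := by
  exact stmt2_general Px A hyp.isMaxitiveMarkov hyp.usc hyp.cpt hyp.equil hyp.isAttracting
    hyp.isLocallyAccessible fun x _ ↦ hyp.exists_isCompact_eventually_mem x
end
end

section
/- The function (x,y) ↦ Π(x,y) is continuous on S × S; for every compact K ⊆ S and every γ > 0 the set ⋃_{x∈K} {y ∈ S : Π(x,y) ≥ γ} is compact; and sup_{y∈S} Π(x,y) = 1 for every x ∈ S, so that Π(x,·) is a deviability density on S for each x. -/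
open Filter Topology Metric Set MeasureTheory
open scoped NNReal

noncomputable section

variable {S : Type*} [MetricSpace S]

/-!
Long-run densities inherit from the Chapman–Kolmogorov inequality the two-sided bound
`Π_{x,s}(x') Π(x',y') Π_{y',t}(y) ≤ Π(x,y)`. Moving between nearby points costs a factor close to
`1`, in both directions, so this bound gives continuity of `Π`. Tightness keeps the superlevel sets
of `Π(x,·)`, `x ∈ K`, inside one compact set, and continuity makes them closed. Finally a path of
density `1` from `x` comes arbitrarily close to `A`, hence reaches some `a ∈ A` at a cost factor
close to `1`, and `Π(a,a) = 1`.
-/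

section BoundedSuprema

variable {ι κ : Type*}

theorem biSup_mem_Icc_zero_one {f : ι → ℝ} {s : Set ι} (hf : ∀ i ∈ s, f i ∈ Icc (0 : ℝ) 1) :
    ⨆ i ∈ s, f i ∈ Icc (0 : ℝ) 1 :=
  ⟨Real.iSup_nonneg fun i => Real.iSup_nonneg fun hi => (hf i hi).1,
    Real.iSup_le (fun i => Real.iSup_le (fun hi => (hf i hi).2) zero_le_one) zero_le_one⟩

theorem le_biSup_of_bddAbove {f : ι → ℝ} {s : Set ι} (hf : BddAbove (f '' s)) {i : ι}
    (hi : i ∈ s) : f i ≤ ⨆ i ∈ s, f i :=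
  le_ciSup₂ (f := fun i (_ : i ∈ s) => f i)
    (hf.mono <| iUnion_subset fun _ => range_subset_iff.2 fun hj => mem_image_of_mem f hj) i hi

theorem bddAbove_image_of_mem_Icc_zero_one {f : ι → ℝ} {s : Set ι}
    (hf : ∀ i ∈ s, f i ∈ Icc (0 : ℝ) 1) : BddAbove (f '' s) :=
  ⟨1, forall_mem_image.2 fun i hi => (hf i hi).2⟩

theorem biSup_mul_biSup_le {f : ι → ℝ} {g : κ → ℝ} {s : Set ι} {t : Set κ} {c : ℝ}
    (hf : ∀ i ∈ s, 0 ≤ f i) (hg : ∀ j ∈ t, 0 ≤ g j) (hc : 0 ≤ c)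
    (h : ∀ i ∈ s, ∀ j ∈ t, f i * g j ≤ c) : (⨆ i ∈ s, f i) * (⨆ j ∈ t, g j) ≤ c := by
  have hg_sup : 0 ≤ ⨆ j ∈ t, g j :=
    Real.iSup_nonneg fun j => Real.iSup_nonneg fun hj => hg j hj
  rw [Real.iSup_mul_of_nonneg hg_sup]
  refine Real.iSup_le (fun i => ?_) hc
  rw [Real.iSup_mul_of_nonneg hg_sup]
  refine Real.iSup_le (fun hi => ?_) hc
  rw [Real.mul_iSup_of_nonneg (hf i hi)]
  refine Real.iSup_le (fun j => ?_) hc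
  rw [Real.mul_iSup_of_nonneg (hf i hi)]
  exact Real.iSup_le (fun hj => h i hi j hj) hc

theorem lt_of_tendsto_of_limsup_biSup_lt {X Y T : Type*} {l : Filter T} [l.NeBot]
    {p : X → T → Y → ℝ} (hp : ∀ x t y, p x t y ∈ Icc (0 : ℝ) 1) {K : Set X} {U : Set Y} {γ c : ℝ}
    (hlim : limsup (fun t => ⨆ x ∈ K, ⨆ y ∈ U, p x t y) l < γ) {x : X} (hx : x ∈ K) {y : Y}
    (hy : y ∈ U) (hc : Tendsto (fun t => p x t y) l (𝓝 c)) : c < γ := by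
  have inner_mem (t : T) (x : X) : ⨆ y ∈ U, p x t y ∈ Icc (0 : ℝ) 1 :=
    biSup_mem_Icc_zero_one fun y _ => hp x t y
  have le_sup (t : T) : p x t y ≤ ⨆ x ∈ K, ⨆ y ∈ U, p x t y :=
    (le_biSup_of_bddAbove (bddAbove_image_of_mem_Icc_zero_one fun y _ => hp x t y) hy).trans <|
      le_biSup_of_bddAbove (f := fun x => ⨆ y ∈ U, p x t y)
        (bddAbove_image_of_mem_Icc_zero_one fun x _ => inner_mem t x) hx
  calc
    c = limsup (fun t => p x t y) l := hc.limsup_eq.symm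
    _ ≤ limsup (fun t => ⨆ x ∈ K, ⨆ y ∈ U, p x t y) l :=
      limsup_le_limsup (.of_forall le_sup) hc.isCoboundedUnder_le <|
        isBoundedUnder_of ⟨1, fun t => (biSup_mem_Icc_zero_one fun x _ => inner_mem t x).2⟩
    _ < γ := hlim

end BoundedSuprema

section Semicontinuity

theorem isCompact_biUnion_superlevel {X Y α : Type*} [TopologicalSpace X] [TopologicalSpace Y]
    [LinearOrder α] {q : X → Y → α} (hq : UpperSemicontinuous fun z : X × Y => q z.1 z.2)
    {K : Set X} (hK : IsCompact K) {L : Set Y} (hL : IsCompact L) {γ : α}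
    (hKL : ∀ x ∈ K, ∀ y, γ ≤ q x y → y ∈ L) : IsCompact (⋃ x ∈ K, {y | γ ≤ q x y}) := by
  convert ((hK.prod hL).inter_right (hq.isClosed_preimage γ)).image continuous_snd using 1
  ext y
  simp only [mem_iUnion, mem_image, mem_inter_iff, mem_prod, mem_preimage, mem_Ici, Prod.exists,
    exists_prop, mem_ofPred_eq]
  constructor
  · rintro ⟨x, hx, hxy⟩
    exact ⟨x, y, ⟨⟨hx, hKL x hx y hxy⟩, hxy⟩, rfl⟩
  · rintro ⟨x, y, ⟨⟨hx, -⟩, hxy⟩, rfl⟩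
    exact ⟨x, hx, hxy⟩

variable {E : Type*} [TopologicalSpace E] [T2Space E] {p : E → ℝ}

theorem IsDeviabilityDensity.upperSemicontinuous (hp : IsDeviabilityDensity p) :
    UpperSemicontinuous p := by
  obtain ⟨mem_Icc, -, isCompact_superlevel⟩ := hp
  refine upperSemicontinuous_iff_isClosed_preimage.2 fun γ => ?_
  rcases le_or_gt γ 0 with hγ₀ | hγ₀
  · have huniv : p ⁻¹' Ici γ = univ := eq_univ_of_forall fun x => hγ₀.trans (mem_Icc x).1
    exact huniv ▸ isClosed_univ
  rcases le_or_gt γ 1 with hγ₁ | hγ₁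
  · exact (isCompact_superlevel γ ⟨hγ₀, hγ₁⟩).isClosed
  · have hempty : p ⁻¹' Ici γ = ∅ :=
      eq_empty_of_forall_notMem fun x hx => (hγ₁.trans_le hx).not_ge (mem_Icc x).2
    exact hempty ▸ isClosed_empty

theorem IsDeviabilityDensity.exists_eq_one (hp : IsDeviabilityDensity p) : ∃ x, p x = 1 := by
  have husc := hp.upperSemicontinuous
  obtain ⟨mem_Icc, iSup_eq, isCompact_superlevel⟩ := hp
  have : Nonempty E := by
    by_contra! h
    rw [Real.iSup_of_isEmpty] at iSup_eq
    exact zero_ne_one iSup_eq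
  obtain ⟨x₀, hx₀⟩ : ∃ x, 1 / 2 < p x := exists_lt_of_lt_ciSup (by rw [iSup_eq]; norm_num)
  obtain ⟨x, hx, hmax⟩ := (husc.upperSemicontinuousOn _).exists_isMaxOn ⟨x₀, hx₀.le⟩
    (isCompact_superlevel (1 / 2) (by norm_num))
  refine ⟨x, (mem_Icc x).2.antisymm ?_⟩
  rw [← iSup_eq]
  refine ciSup_le fun y => ?_
  rcases le_total (1 / 2) (p y) with hy | hy
  · exact hmax hy
  · exact hy.trans hx

end Semicontinuity

section TransitionDensity

/-- A time-homogeneous transition density of a maxitive process: `p x t y` is the deviability of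
being at `y` at time `t` after a start at `x`. Of the maxitive Chapman–Kolmogorov equation
`p x (s + t) y = ⨆ z, p x s z * p z t y` only the inequality `≥` is recorded. -/
structure IsTransitionDensity {X T : Type*} [Add T] (p : X → T → X → ℝ) : Prop where
  mem_Icc : ∀ x t y, p x t y ∈ Icc (0 : ℝ) 1
  mul_le : ∀ x z y s t, p x s z * p z t y ≤ p x (s + t) y

namespace IsTransitionDensity

variable {X T : Type*} [Add T] [LinearOrder T] [Nonempty T] {p : X → T → X → ℝ} {q : X → X → ℝ}

theorem limit_mem_Icc (hp : IsTransitionDensity p)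
    (hq : ∀ x y, Tendsto (fun t => p x t y) atTop (𝓝 (q x y))) (x y : X) :
    q x y ∈ Icc (0 : ℝ) 1 :=
  isClosed_Icc.mem_of_tendsto (hq x y) (.of_forall fun t => hp.mem_Icc x t y)

variable [CanonicallyOrderedAdd T]

theorem mul_limit_le (hp : IsTransitionDensity p)
    (hq : ∀ x y, Tendsto (fun t => p x t y) atTop (𝓝 (q x y))) (x z y : X) (s : T) :
    p x s z * q z y ≤ q x y :=
  have hs : Tendsto (s + ·) atTop atTop := tendsto_atTop_mono (fun _ => le_add_self) tendsto_id
  le_of_tendsto_of_tendsto' ((hq z y).const_mul _) ((hq x y).comp hs) fun t => hp.mul_le x z y s t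

theorem limit_mul_le (hp : IsTransitionDensity p)
    (hq : ∀ x y, Tendsto (fun t => p x t y) atTop (𝓝 (q x y))) (x z y : X) (t : T) :
    q x z * p z t y ≤ q x y :=
  have ht : Tendsto (· + t) atTop atTop := tendsto_atTop_mono (fun _ => le_self_add) tendsto_id
  le_of_tendsto_of_tendsto' ((hq x z).mul_const _) ((hq x y).comp ht) fun s => hp.mul_le x z y s t

theorem limit_sub_two_mul_le (hp : IsTransitionDensity p)
    (hq : ∀ x y, Tendsto (fun t => p x t y) atTop (𝓝 (q x y))) {x x' y y' : X} {s t : T} {ε : ℝ}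
    (hx : 1 - ε < p x s x') (hy : 1 - ε < p y' t y) : q x' y' - 2 * ε ≤ q x y := by
  have sub_le_mul {a u : ℝ} (ha : a ∈ Icc (0 : ℝ) 1) (hu : u ≤ 1) (hε : 1 - ε < u) :
      a - ε ≤ a * u := by
    nlinarith [mul_nonneg (sub_nonneg.2 ha.2) (sub_nonneg.2 hu)]
  calc
    q x' y' - 2 * ε ≤ q x' y' * p y' t y - ε := by
      linarith [sub_le_mul (hp.limit_mem_Icc hq x' y') (hp.mem_Icc y' t y).2 hy]
    _ ≤ q x' y - ε := by gcongr; exact hp.limit_mul_le hq x' y' y t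
    _ ≤ p x s x' * q x' y := by
      rw [mul_comm]
      exact sub_le_mul (hp.limit_mem_Icc hq x' y) (hp.mem_Icc x s x').2 hx
    _ ≤ q x y := hp.mul_limit_le hq x x' y s

theorem continuous_limit [TopologicalSpace X] (hp : IsTransitionDensity p)
    (hq : ∀ x y, Tendsto (fun t => p x t y) atTop (𝓝 (q x y)))
    (hloc : ∀ x, ∀ ε > 0, ∀ᶠ x' in 𝓝 x, (∃ t, 1 - ε < p x t x') ∧ ∃ t, 1 - ε < p x' t x) :
    Continuous fun z : X × X => q z.1 z.2 := by
  refine continuous_iff_continuousAt.2 fun ⟨x, y⟩ => Metric.tendsto_nhds.2 fun ε hε => ?_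
  filter_upwards [(hloc x (ε / 3) (by positivity)).prodMk_nhds (hloc y (ε / 3) (by positivity))]
  rintro ⟨x', y'⟩ ⟨⟨⟨s, hxx'⟩, s', hx'x⟩, ⟨t, hyy'⟩, t', hy'y⟩
  have hupper : q x' y' - 2 * (ε / 3) ≤ q x y := hp.limit_sub_two_mul_le hq hxx' hy'y
  have hlower : q x y - 2 * (ε / 3) ≤ q x' y' := hp.limit_sub_two_mul_le hq hx'x hyy'
  rw [Real.dist_eq, abs_lt]
  constructor <;> linarith

theorem le_limit_of_forall_self_eq_one (hp : IsTransitionDensity p)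
    (hq : ∀ x y, Tendsto (fun t => p x t y) atTop (𝓝 (q x y))) {a : X} (ha : ∀ t, p a t a = 1)
    (x : X) (t : T) : p x t a ≤ q x a := by
  have hqa : q a a = 1 := tendsto_nhds_unique (hq a a) (by simp only [ha, tendsto_const_nhds])
  simpa only [hqa, mul_one] using hp.mul_limit_le hq x a a t

theorem iSup_limit_eq_one (hp : IsTransitionDensity p)
    (hq : ∀ x y, Tendsto (fun t => p x t y) atTop (𝓝 (q x y))) {A : Set X}
    (hA : ∀ a ∈ A, ∀ t, p a t a = 1) {x : X}
    (hx : ∀ ε > 0, ∃ t, ∃ a ∈ A, 1 - ε < p x t a) : ⨆ y, q x y = 1 := by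
  have : Nonempty X := ⟨x⟩
  have hle (y : X) : q x y ≤ 1 := (hp.limit_mem_Icc hq x y).2
  refine (ciSup_le hle).antisymm (le_of_forall_pos_le_add fun ε hε => ?_)
  obtain ⟨t, a, haA, hta⟩ := hx ε hε
  rw [← sub_le_iff_le_add]
  calc
    1 - ε ≤ p x t a := hta.le
    _ ≤ q x a := hp.le_limit_of_forall_self_eq_one hq (hA a haA) x t
    _ ≤ ⨆ y, q x y := le_ciSup ⟨1, forall_mem_range.2 hle⟩ a

end IsTransitionDensity

end TransitionDensity

section Concatenation

/-- The path following `X` up to time `s` and the time-shifted path `Y` afterwards; the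
Chapman–Kolmogorov inequality is obtained by bounding its density. -/
def concatPath {E : Type*} [TopologicalSpace E] (X Y : C(ℝ≥0, E)) (s : ℝ≥0) (h : Y 0 = X s) :
    C(ℝ≥0, E) where
  toFun u := if u ≤ s then X u else Y (u - s)
  continuous_toFun := by
    refine Continuous.if_le X.continuous (Y.continuous.comp (by fun_prop)) continuous_id
      continuous_const fun u hu => ?_
    rw [hu, tsub_self, h]

variable {E : Type*} [TopologicalSpace E]

theorem concatPath_of_le {X Y : C(ℝ≥0, E)} {s u : ℝ≥0} (h : Y 0 = X s) (hu : u ≤ s) :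
    concatPath X Y s h u = X u :=
  if_pos hu

theorem concatPath_add {X Y : C(ℝ≥0, E)} {s : ℝ≥0} (h : Y 0 = X s) (u : ℝ≥0) :
    concatPath X Y s h (s + u) = Y u := by
  rcases eq_or_ne u 0 with rfl | hu
  · rw [add_zero, concatPath_of_le h le_rfl, h]
  · have hsu : ¬ s + u ≤ s := by simpa using hu
    exact (if_neg hsu).trans (by rw [add_tsub_cancel_left])

theorem pshift_concatPath {X Y : C(ℝ≥0, S)} {s : ℝ≥0} (h : Y 0 = X s) :
    pshift s (concatPath X Y s h) = Y :=
  ContinuousMap.ext (concatPath_add h)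

end Concatenation

section PathDensity

variable {Px : S → C(ℝ≥0, S) → ℝ}

theorem transDen_mem_Icc (hPx : ∀ x X, Px x X ∈ Icc (0 : ℝ) 1) (x : S) (t : ℝ≥0) (y : S) :
    transDen Px x t y ∈ Icc (0 : ℝ) 1 :=
  biSup_mem_Icc_zero_one fun X _ => hPx x X

theorem le_transDen (hPx : ∀ x X, Px x X ∈ Icc (0 : ℝ) 1) (x : S) (t : ℝ≥0) (X : C(ℝ≥0, S)) :
    Px x X ≤ transDen Px x t (X t) :=
  le_biSup_of_bddAbove (s := {X' : C(ℝ≥0, S) | X' t = X t})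
    (bddAbove_image_of_mem_Icc_zero_one fun X' _ => hPx x X') rfl

theorem transDen_self_eq_one (hPx : ∀ x X, Px x X ∈ Icc (0 : ℝ) 1) {a : S}
    (ha : Px a (ContinuousMap.const ℝ≥0 a) = 1) (t : ℝ≥0) : transDen Px a t a = 1 :=
  (transDen_mem_Icc hPx a t a).2.antisymm <|
    ha.ge.trans (le_transDen hPx a t (ContinuousMap.const ℝ≥0 a))

theorem mul_le_concatPath (hPx : ∀ x X, Px x X ∈ Icc (0 : ℝ) 1)
    (markov : ∀ x (X : C(ℝ≥0, S)) s,
      (⨆ X' ∈ {X' : C(ℝ≥0, S) | ∀ u ≤ s, X' u = X u}, Px x X') * Px (X s) (pshift s X) ≤ Px x X)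
    (x : S) {X Y : C(ℝ≥0, S)} {s : ℝ≥0} (h : Y 0 = X s) :
    Px x X * Px (X s) Y ≤ Px x (concatPath X Y s h) := by
  have hsup : Px x X ≤ ⨆ X' ∈ {X' : C(ℝ≥0, S) | ∀ u ≤ s, X' u = concatPath X Y s h u}, Px x X' :=
    le_biSup_of_bddAbove (s := {X' : C(ℝ≥0, S) | ∀ u ≤ s, X' u = concatPath X Y s h u})
      (bddAbove_image_of_mem_Icc_zero_one fun X' _ => hPx x X')
      fun u hu => (concatPath_of_le h hu).symm
  have hmarkov := markov x (concatPath X Y s h) s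
  rw [pshift_concatPath h, concatPath_of_le h le_rfl] at hmarkov
  exact (mul_le_mul_of_nonneg_right hsup (hPx _ Y).1).trans hmarkov

theorem isTransitionDensity_transDen (hPx : ∀ x X, Px x X ∈ Icc (0 : ℝ) 1)
    (start : ∀ x (X : C(ℝ≥0, S)), X 0 ≠ x → Px x X = 0)
    (markov : ∀ x (X : C(ℝ≥0, S)) s,
      (⨆ X' ∈ {X' : C(ℝ≥0, S) | ∀ u ≤ s, X' u = X u}, Px x X') *
        Px (X s) (pshift s X) ≤ Px x X) :
    IsTransitionDensity (transDen Px) where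
  mem_Icc := transDen_mem_Icc hPx
  mul_le x z y s t := by
    have hnonneg := (transDen_mem_Icc hPx x (s + t) y).1
    refine biSup_mul_biSup_le (fun X _ => (hPx x X).1) (fun Y _ => (hPx z Y).1) hnonneg ?_
    rintro X rfl Y rfl
    by_cases h : Y 0 = X s
    · calc
        Px x X * Px (X s) Y ≤ Px x (concatPath X Y s h) := mul_le_concatPath hPx markov x h
        _ ≤ transDen Px x (s + t) (concatPath X Y s h (s + t)) := le_transDen hPx x (s + t) _
        _ = transDen Px x (s + t) (Y t) := by rw [concatPath_add]
    · rwa [start _ Y h, mul_zero]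

theorem exists_lt_transDen_of_iInf_infDist_eq_zero (hPx : ∀ x X, Px x X ∈ Icc (0 : ℝ) 1)
    (htrans : IsTransitionDensity (transDen Px)) {A : Set S} {ε δ : ℝ} (hδ : 0 < δ)
    (near : ∀ z, infDist z A < δ → ∃ t, ∃ a ∈ A, 1 - ε < transDen Px z t a) {x : S}
    {X : C(ℝ≥0, S)} (hX : Px x X = 1) (hXA : ⨅ t, infDist (X t) A = 0) :
    ∃ t, ∃ a ∈ A, 1 - ε < transDen Px x t a := by
  obtain ⟨s, hs⟩ := exists_lt_of_ciInf_lt (hXA.trans_lt hδ)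
  obtain ⟨t, a, ha, hta⟩ := near (X s) hs
  refine ⟨s + t, a, ha, hta.trans_le ?_⟩
  have hone : 1 ≤ transDen Px x s (X s) := hX.ge.trans (le_transDen hPx x s X)
  exact (le_mul_of_one_le_left (htrans.mem_Icc _ t a).1 hone).trans (htrans.mul_le x (X s) a s t)

end PathDensity

theorem stmt4_general {Px : S → C(ℝ≥0, S) → ℝ} {A : Set S}
    (dev : ∀ x, IsDeviabilityDensity (Px x))
    (start : ∀ x (X : C(ℝ≥0, S)), X 0 ≠ x → Px x X = 0)
    (markov : ∀ x (X : C(ℝ≥0, S)) s,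
      (⨆ X' ∈ {X' : C(ℝ≥0, S) | ∀ u ≤ s, X' u = X u}, Px x X') *
        Px (X s) (pshift s X) ≤ Px x X)
    (attract : ∀ x (X : C(ℝ≥0, S)), Px x X = 1 → ⨅ t, infDist (X t) A = 0)
    (equil : ∀ a ∈ A, Px a (ContinuousMap.const ℝ≥0 a) = 1)
    (nearA : ∀ ε > 0, ∃ δ > 0, ∀ x, infDist x A < δ →
      ∃ t, ∃ a ∈ A, 1 - ε < transDen Px x t a)
    (localMove : ∀ x, ∀ ε > 0, ∀ᶠ x' in 𝓝 x,
      (∃ t, 1 - ε < transDen Px x t x') ∧ ∃ t, 1 - ε < transDen Px x' t x)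
    (tight : ∀ K₁ : Set S, IsCompact K₁ → ∀ ε > 0, ∃ K₂ : Set S, IsCompact K₂ ∧
      limsup (fun t => ⨆ x ∈ K₁, ⨆ y ∈ K₂ᶜ, transDen Px x t y) atTop < ε)
    {PL : S → S → ℝ} (hPL : ∀ x y, Tendsto (fun t => transDen Px x t y) atTop (𝓝 (PL x y))) :
    Continuous (fun q : S × S => PL q.1 q.2) ∧
    (∀ K : Set S, IsCompact K → ∀ γ : ℝ, 0 < γ →
      IsCompact (⋃ x ∈ K, {y : S | γ ≤ PL x y})) ∧
    ∀ x : S, (⨆ y : S, PL x y) = 1 := by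
  have hPx : ∀ x X, Px x X ∈ Icc (0 : ℝ) 1 := fun x => (dev x).1
  have htrans : IsTransitionDensity (transDen Px) := isTransitionDensity_transDen hPx start markov
  have hcont : Continuous fun q : S × S => PL q.1 q.2 := htrans.continuous_limit hPL localMove
  refine ⟨hcont, fun K hK γ hγ => ?_, fun x => ?_⟩
  · obtain ⟨L, hL, hlim⟩ := tight K hK γ hγ
    refine isCompact_biUnion_superlevel hcont.upperSemicontinuous hK hL fun x hx y hγy => ?_
    by_contra hyL
    exact (lt_of_tendsto_of_limsup_biSup_lt htrans.mem_Icc hlim hx hyL (hPL x y)).not_ge hγy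
  · refine htrans.iSup_limit_eq_one hPL (fun a ha => transDen_self_eq_one hPx (equil a ha))
      fun ε hε => ?_
    obtain ⟨X, hX⟩ := (dev x).exists_eq_one
    obtain ⟨δ, hδ, near⟩ := nearA ε hε
    exact exists_lt_transDen_of_iInf_infDist_eq_zero hPx htrans hδ near hX (attract x X hX)

theorem DevSetup.eventually_transDen {Px : S → C(ℝ≥0, S) → ℝ} {A : Set S}
    (hyp : DevSetup S Px A) (x : S) {ε : ℝ} (hε : 0 < ε) :
    ∀ᶠ x' in 𝓝 x, (∃ t, 1 - ε < transDen Px x t x') ∧ ∃ t, 1 - ε < transDen Px x' t x := by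
  obtain ⟨δ, hδ, t₀, t₁, hball⟩ := hyp.localMove x ε hε
  filter_upwards [ball_mem_nhds x hδ] with x' hx'
  obtain ⟨hto, hfrom⟩ := hball x' (mem_ball'.1 hx')
  exact ⟨⟨t₀, hto⟩, t₁, hfrom⟩

theorem DevSetup.exists_transDen_of_infDist_lt {Px : S → C(ℝ≥0, S) → ℝ} {A : Set S}
    (hyp : DevSetup S Px A) {ε : ℝ} (hε : 0 < ε) :
    ∃ δ > 0, ∀ x, infDist x A < δ → ∃ t, ∃ a ∈ A, 1 - ε < transDen Px x t a := by
  obtain ⟨δ, hδ, hnear⟩ := hyp.nearA ε hε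
  refine ⟨δ, hδ, fun x hx => ?_⟩
  obtain ⟨t, -, -, -, a, ha, hto, -⟩ := hnear x hx
  exact ⟨t, a, ha, hto⟩

theorem stmt4 (Px : S → C(ℝ≥0, S) → ℝ) (A : Set S) (hyp : DevSetup S Px A)
    (PL : S → S → ℝ)
    (hPL : ∀ x y : S, Tendsto (fun t : ℝ≥0 => transDen Px x t y) atTop (𝓝 (PL x y))) :
    Continuous (fun q : S × S => PL q.1 q.2) ∧
    (∀ K : Set S, IsCompact K → ∀ γ : ℝ, 0 < γ →
      IsCompact (⋃ x ∈ K, {y : S | γ ≤ PL x y})) ∧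
    ∀ x : S, (⨆ y : S, PL x y) = 1 :=
  stmt4_general hyp.dev hyp.start (fun x X s => (hyp.markov x X s).ge) hyp.attract hyp.equil
    (fun _ => hyp.exists_transDen_of_infDist_lt) (fun x _ => hyp.eventually_transDen x)
    hyp.tight hPL
end
end
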